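/- arXiv:math/0205134 — 2 statements merged into one kernel-verified Lean document; each statement's English description precedes it below -/
import Mathlib

section
/- Let P and Q be complex polynomials and let a, b be distinct complex numbers with P(a) = P(b). Suppose a and b are not critical points of P, i.e. P'(a) ≠ 0 and P'(b) ≠ 0. Suppose that for every integer i ≥ 0 the moment ∫_a^b P(z)^i Q'(z) dz vanishes, i.e. every polynomial R with R' = P^i·Q' satisfies R(a) = R(b). Then there exist complex polynomials P̃, Q̃, W such that P = P̃ ∘ W, Q = Q̃ ∘ W, and W(a) = W(b). -/
open Polynomial

/-! Normalize `P` to be monic with `P a = P b = 0`; integrating by parts, all the moments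
`∫_a^b P^i Q dP` vanish. For a suitable polynomial `d` with `d 0 = 1`, the derivation `d(t) t d/dt`
of the line `t = P` lifts to a derivation `θ` of `K[X]`. It preserves the spaces of polynomials
whose moments vanish from the `k`-th on, and its action modulo `P` splits them. Together with the
finiteness of `K[X]` over the Noetherian ring `K[P]`, this shows that vanishing of almost all
moments implies vanishing of all of them. Comparing eigenvalues of `θ`, the polynomials with
vanishing moments then take the same values on the two local inverse branches of `P` at `a` and `b`,
order by order. The rational functions on which the two branches agree form an intermediate field of
`K(X) / K` that contains `P` and `Q`, and by Lüroth's theorem it is generated by a polynomial `W`.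
-/

section Integral

variable {K : Type*} [Field K]

/-- The primitive of a polynomial that vanishes at `0`. -/
noncomputable def antiderivative : K[X] →ₗ[K] K[X] :=
  Polynomial.lsum fun n => ((n + 1 : K)⁻¹) • monomial (n + 1)

theorem derivative_antiderivative [CharZero K] (f : K[X]) :
    derivative (antiderivative f) = f := by
  induction f using Polynomial.induction_on' with
  | add f g hf hg => rw [map_add, derivative_add, hf, hg]
  | monomial n c =>
    have hn : (n + 1 : K) ≠ 0 := n.cast_add_one_ne_zero
    simp only [antiderivative, lsum_apply, LinearMap.smul_apply, smul_monomial, smul_eq_mul,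
      mul_zero, monomial_zero_right, sum_monomial_index, derivative_monomial, Nat.add_sub_cancel,
      Nat.cast_succ]
    field_simp

/-- The integral `∫_a^b f dz` of a polynomial, computed from its primitive. -/
noncomputable def integralBetween (a b : K) : K[X] →ₗ[K] K :=
  (leval b - leval a) ∘ₗ antiderivative

theorem integralBetween_derivative [CharZero K] (a b : K) (f : K[X]) :
    integralBetween a b (derivative f) = f.eval b - f.eval a := by
  obtain ⟨c, hc⟩ : ∃ c, antiderivative (derivative f) = f + C c := by
    refine ⟨_, (sub_eq_iff_eq_add'.mp (eq_C_of_derivative_eq_zero ?_))⟩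
    rw [derivative_sub, derivative_antiderivative, sub_self]
  simp [integralBetween, hc, leval_apply]

theorem integralBetween_mul_derivative [CharZero K] {a b : K} {f : K[X]}
    (hfa : f.eval a = 0) (hfb : f.eval b = 0) (g : K[X]) :
    integralBetween a b (f * derivative g) = -integralBetween a b (derivative f * g) := by
  have h := integralBetween_derivative a b (f * g)
  rw [derivative_mul, map_add, eval_mul, eval_mul, hfa, hfb] at h
  linear_combination h

end Integral

section LinearAlgebra

variable {K V M : Type*} [Field K] [AddCommGroup V] [Module K V] [AddCommGroup M] [Module K M]

theorem exists_eq_add_of_ker_sq [FiniteDimensional K M] (T : Module.End K V) (ρ : V →ₗ[K] M)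
    (hT : ∀ u, ρ u = 0 → ρ (T u) = 0) (hTT : ∀ u, ρ (T (T u)) = 0 → ρ (T u) = 0) (u : V) :
    ∃ v w, u = T v + w ∧ ρ (T w) = 0 := by
  let S : Module.End K (V ⧸ LinearMap.ker ρ) := (LinearMap.ker ρ).mapQ _ T fun v hv => hT v hv
  have hS : ∀ v, S (Submodule.Quotient.mk v) = Submodule.Quotient.mk (T v) := fun v => rfl
  have : FiniteDimensional K (V ⧸ LinearMap.ker ρ) :=
    Module.Finite.equiv ρ.quotKerEquivRange.symm
  have hdisj : Disjoint (LinearMap.range S) (LinearMap.ker S) := by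
    rw [Submodule.disjoint_def]
    rintro _ ⟨y, rfl⟩ hy
    induction y using Submodule.Quotient.induction_on with | _ y
    rw [LinearMap.mem_ker, hS, hS, Submodule.Quotient.mk_eq_zero, LinearMap.mem_ker] at hy
    rw [hS, Submodule.Quotient.mk_eq_zero, LinearMap.mem_ker]
    exact hTT y hy
  have htop : LinearMap.range S ⊔ LinearMap.ker S = ⊤ :=
    Submodule.eq_top_of_disjoint _ _ (LinearMap.finrank_range_add_finrank_ker S).ge hdisj
  obtain ⟨_, ⟨v, rfl⟩, z, hz, hvz⟩ := Submodule.mem_sup.mp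
    (htop ▸ Submodule.mem_top : Submodule.Quotient.mk u ∈ LinearMap.range S ⊔ LinearMap.ker S)
  induction v using Submodule.Quotient.induction_on with | _ v
  have hz' : z = Submodule.Quotient.mk (u - T v) := by
    rw [Submodule.Quotient.mk_sub, ← hS, ← hvz, add_sub_cancel_left]
  refine ⟨v, u - T v, (add_sub_cancel _ _).symm, ?_⟩
  rwa [hz', LinearMap.mem_ker, hS, Submodule.Quotient.mk_eq_zero] at hz

end LinearAlgebra

section Stabilization

theorem finite_aeval_of_monic {R : Type*} [CommRing R] {P : R[X]} (hP : P.Monic)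
    (hdeg : P.natDegree ≠ 0) : Module.Finite R[X] (Module.AEval R R[X] P) := by
  let of := Module.AEval.of R R[X] P
  let S : Set (Module.AEval R R[X] P) := (fun i => of (X ^ i)) '' Set.Iio P.natDegree
  have hsmall (r : R[X]) (hr : r.natDegree < P.natDegree) : of r ∈ Submodule.span R[X] S := by
    rw [r.as_sum_range' _ hr, map_sum]
    refine Submodule.sum_mem _ fun i hi => ?_
    rw [← smul_X_eq_monomial, map_smul, ← Module.AEval.C_smul]
    exact Submodule.smul_mem _ _ (Submodule.subset_span ⟨i, Finset.mem_range.mp hi, rfl⟩)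
  have hspan (f : R[X]) : of f ∈ Submodule.span R[X] S := by
    induction hn : f.natDegree using Nat.strong_induction_on generalizing f with | _ n ih
    by_cases hf : f.natDegree < P.natDegree
    · exact hsmall f hf
    have hP1 : P ≠ 1 := fun h => hdeg (by rw [h, natDegree_one])
    rw [← modByMonic_add_div f P, map_add, ← smul_eq_mul P, ← Module.AEval.X_smul_of]
    refine add_mem (hsmall _ (natDegree_modByMonic_lt f hP hP1))
      (Submodule.smul_mem _ _ (ih _ ?_ _ rfl))
    rw [natDegree_divByMonic f hP]
    omega
  exact Module.finite_def.mpr (Submodule.fg_def.mpr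
    ⟨S, (Set.finite_Iio _).image _, eq_top_iff.mpr fun x _ => hspan x⟩)

theorem exists_forall_le_of_monotone {R : Type*} [CommRing R] [IsNoetherianRing R] {P : R[X]}
    (hP : P.Monic) (hdeg : P.natDegree ≠ 0) {V : ℕ → Submodule R R[X]} (hV : Monotone V)
    (hPV : ∀ k, ∀ f ∈ V k, P * f ∈ V k) : ∃ N, ∀ k, V k ≤ V N := by
  have := finite_aeval_of_monic hP hdeg
  let F : ℕ →o Submodule R[X] (Module.AEval R R[X] P) :=
    ⟨fun k => Module.AEval.mapSubmodule R R[X] P ⟨V k, fun f hf => hPV k f hf⟩,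
      fun i j hij => (Module.AEval.mapSubmodule R R[X] P).monotone (hV hij)⟩
  obtain ⟨N, hN⟩ := monotone_stabilizes_iff_noetherian.mpr inferInstance F
  refine ⟨N, fun k => (hV (le_max_left k N)).trans ?_⟩
  have h := (Module.AEval.mapSubmodule R R[X] P).injective (hN _ (le_max_right k N))
  exact (congrArg Subtype.val h).ge

end Stabilization

section EulerLift

section CommRing

variable {R : Type*} [CommRing R]

theorem derivation_apply_eq_derivative_mul (θ : Derivation R R[X] R[X]) (f : R[X]) :
    θ f = derivative f * θ X := by
  simpa using θ.map_aeval f X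

/-- `θ` lifts the derivation `d(t) t d/dt` of `R[t]` along `t = P`, where `d(0) = 1`; to first
order at `t = 0` this is the Euler derivation `t d/dt`. -/
structure IsEulerLift (P d : R[X]) (θ : Derivation R R[X] R[X]) : Prop where
  map_self : θ P = d.comp P * P
  eval_zero : d.eval 0 = 1

namespace IsEulerLift

variable {P d : R[X]} {θ : Derivation R R[X] R[X]}

theorem map_mul (h : IsEulerLift P d θ) (f : R[X]) : θ (P * f) = P * (d.comp P * f + θ f) := by
  rw [Derivation.leibniz, h.map_self, smul_eq_mul, smul_eq_mul]
  ring

theorem derivative_mul_map (h : IsEulerLift P d θ) (f : R[X]) :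
    derivative P * θ f = d.comp P * P * derivative f := by
  rw [← h.map_self, derivation_apply_eq_derivative_mul θ f, derivation_apply_eq_derivative_mul θ P]
  ring

theorem dvd_comp_sub_one (h : IsEulerLift P d θ) : P ∣ d.comp P - 1 := by
  obtain ⟨e, he⟩ : X ∣ d - 1 := by
    rw [X_dvd_iff, coeff_zero_eq_eval_zero, eval_sub, h.eval_zero, eval_one, sub_self]
  exact ⟨e.comp P, by simpa using congrArg (comp · P) he⟩

end IsEulerLift

end CommRing

variable {K : Type*} [Field K] [CharZero K] {P d u π : K[X]} {θ : Derivation K K[X] K[X]}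

theorem emultiplicity_derivative_lt (hP : P ≠ 0) (hπ : Irreducible π) (h : π ∣ P) :
    emultiplicity π (derivative P) < emultiplicity π P := by
  obtain ⟨m, p, hπp, hp⟩ := WfDvdMonoid.max_power_factor hP hπ
  obtain ⟨n, rfl⟩ : ∃ n, m = n + 1 :=
    Nat.exists_eq_add_one_of_ne_zero fun hm => hπp (by simpa [hp, hm] using h)
  have hππ' : ¬ π ∣ derivative π := fun h' =>
    hπ.not_isUnit (hπ.separable.isUnit_of_dvd' dvd_rfl h')
  have hn : IsUnit (C (n + 1 : K)) := isUnit_C.mpr n.cast_add_one_ne_zero.isUnit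
  have hP' : derivative P = π ^ n * (π * derivative p + C (n + 1 : K) * (derivative π * p)) := by
    rw [hp, derivative_mul, derivative_pow_succ]
    ring
  refine lt_of_lt_of_le (b := ((n + 1 : ℕ) : ℕ∞)) ?_ (pow_dvd_iff_le_emultiplicity.mp ⟨p, hp⟩)
  rw [emultiplicity_lt_iff_not_dvd, hP', pow_succ, mul_dvd_mul_iff_left (pow_ne_zero n hπ.ne_zero),
    dvd_add_right (dvd_mul_right _ _), hn.dvd_mul_left, hπ.prime.dvd_mul]
  exact not_or_intro hππ' hπp

theorem derivative_dvd_mul_of_dvd_pow_mul (hP' : derivative P ≠ 0) {n : ℕ} {f : K[X]}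
    (h : derivative P ∣ P ^ n * f) : derivative P ∣ P * f := by
  have hP : P ≠ 0 := fun h => hP' (by rw [h, derivative_zero])
  rw [UniqueFactorizationMonoid.dvd_iff_emultiplicity_le hP'] at h ⊢
  intro π hπ
  rw [emultiplicity_mul hπ]
  by_cases hπP : π ∣ P
  · exact (emultiplicity_derivative_lt hP hπ.irreducible hπP).le.trans le_self_add
  · simpa [emultiplicity_mul hπ, emultiplicity_pow hπ, emultiplicity_eq_zero.mpr hπP] using h π hπ

theorem exists_isEulerLift (hP' : derivative P ≠ 0) : ∃ d θ, IsEulerLift P d θ := by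
  have : Module.Finite K (AdjoinRoot (derivative P)) := (AdjoinRoot.powerBasis hP').finite
  let x := AdjoinRoot.mk (derivative P) P
  obtain ⟨n, ν, hXν, hν⟩ := WfDvdMonoid.max_power_factor
    (minpoly.ne_zero (IsIntegral.of_finite K x)) irreducible_X
  rw [X_dvd_iff, coeff_zero_eq_eval_zero] at hXν
  have hdvd : derivative P ∣ P ^ n * ν.comp P := by
    rw [← AdjoinRoot.mk_eq_zero, map_mul, map_pow, ← AdjoinRoot.aeval_eq (ν.comp P),
      aeval_comp, AdjoinRoot.aeval_eq]
    simpa [hν] using minpoly.aeval K x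
  obtain ⟨g, hg⟩ := derivative_dvd_mul_of_dvd_pow_mul hP' hdvd
  refine ⟨C (ν.eval 0)⁻¹ * ν, mkDerivation K (C (ν.eval 0)⁻¹ * g), ?_, by simp [hXν]⟩
  rw [mkDerivation_apply, smul_eq_mul, mul_comp, C_comp]
  linear_combination (- C (ν.eval 0)⁻¹) * hg

namespace IsEulerLift

theorem dvd_map (h : IsEulerLift P d θ) (hP : P ≠ 0) (hπ : Irreducible π) (hπP : π ∣ P) (f : K[X]) :
    π ∣ θ f := by
  rw [derivation_apply_eq_derivative_mul]
  have hlt := emultiplicity_derivative_lt hP hπ hπP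
  refine Dvd.dvd.mul_left (by_contra fun hdvd => hlt.not_ge ?_) _
  calc emultiplicity π P ≤ emultiplicity π (d.comp P * P) :=
        emultiplicity_le_emultiplicity_of_dvd_right (dvd_mul_left _ _)
    _ = emultiplicity π (derivative P) := by
        rw [← h.map_self, derivation_apply_eq_derivative_mul, emultiplicity_mul hπ.prime,
          emultiplicity_eq_zero.mpr hdvd, add_zero]

/- `s` is `θ π / π`: to leading order, `θ` acts as multiplication by `n * s` on the polynomials that
vanish to order `n` along `π`. -/
theorem exists_forall_dvd_natCast_mul_sub (h : IsEulerLift P d θ) (hP : P ≠ 0)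
    (hπ : Irreducible π) (hπP : π ∣ P) :
    ∃ s, ∀ {n : ℕ} {f c : K[X]}, ¬ π ∣ f →
      π ^ (n + 1) ∣ θ (π ^ n * f) - c * (π ^ n * f) → π ∣ n * s - c := by
  obtain ⟨s, hs⟩ := h.dvd_map hP hπ hπP π
  refine ⟨s, fun {n f c} hf hdvd => ?_⟩
  have hpow : θ (π ^ n) = n * s * π ^ n := by
    rcases n with _ | n
    · simp
    · simp only [Derivation.leibniz_pow, hs, Nat.add_sub_cancel, smul_eq_mul, nsmul_eq_mul]
      ring
  have hθ : θ (π ^ n * f) - c * (π ^ n * f) = π ^ n * (θ f + (n * s - c) * f) := by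
    rw [Derivation.leibniz, hpow, smul_eq_mul, smul_eq_mul]
    ring
  rw [hθ, pow_succ, mul_dvd_mul_iff_left (pow_ne_zero n hπ.ne_zero),
    dvd_add_right (h.dvd_map hP hπ hπP f)] at hdvd
  exact (hπ.prime.dvd_or_dvd hdvd).resolve_right hf

theorem dvd_of_dvd_map_sub (h : IsEulerLift P d θ) (hP : P ≠ 0) (κ : ℤ)
    (hu : P ∣ θ u - κ * u) (hκ : κ = 0 → ∀ π, Irreducible π → π ∣ P → π ∣ u) : P ∣ u := by
  rcases eq_or_ne u 0 with rfl | hu0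
  · exact dvd_zero P
  rw [UniqueFactorizationMonoid.dvd_iff_emultiplicity_le hP]
  intro π hπ
  by_contra! hlt
  have hπP : π ∣ P := dvd_of_emultiplicity_pos (pos_of_gt hlt)
  obtain ⟨s, hs⟩ := h.exists_forall_dvd_natCast_mul_sub hP hπ.irreducible hπP
  obtain ⟨m, p, hπp, hp⟩ := WfDvdMonoid.max_power_factor hP hπ.irreducible
  obtain ⟨j, w, hπw, rfl⟩ := WfDvdMonoid.max_power_factor hu0 hπ.irreducible
  have horder {n : ℕ} {f : K[X]} (hf : ¬ π ∣ f) : emultiplicity π (π ^ n * f) = n := by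
    rw [emultiplicity_mul hπ, emultiplicity_pow_self_of_prime hπ, emultiplicity_eq_zero.mpr hf,
      add_zero]
  have hjm : j < m := by rwa [hp, horder hπw, horder hπp, Nat.cast_lt] at hlt
  have hm : π ∣ m * s - 1 := by
    have hd : π ∣ m * s - d.comp P := hs hπp (by rw [← hp, h.map_self, sub_self]; exact dvd_zero _)
    simpa using dvd_add hd (hπP.trans h.dvd_comp_sub_one)
  have hj : π ∣ j * s - κ := hs hπw (((pow_dvd_pow π hjm).trans ⟨p, hp⟩).trans hu)
  have hconst : π ∣ C ((j - κ * m : ℤ) : K) := by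
    convert (hj.mul_left (m : K[X])).sub (hm.mul_left (j : K[X])) using 1
    simp only [Int.cast_sub, Int.cast_mul, Int.cast_natCast, C_sub, C_mul, map_natCast, map_intCast]
    ring
  have hjκ : (j : ℤ) = κ * m := by
    by_contra hne
    exact hπ.not_isUnit (isUnit_of_dvd_unit hconst
      (isUnit_C.mpr (Int.cast_ne_zero.mpr (sub_ne_zero.mpr hne)).isUnit))
  obtain rfl : j = 0 :=
    Nat.eq_zero_of_dvd_of_lt (Int.natCast_dvd_natCast.mp (Dvd.intro_left κ hjκ.symm)) hjm
  have hκ0 : κ = 0 := by simpa [hjm.ne'] using hjκ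
  exact hπw (by simpa using hκ hκ0 π hπ.irreducible hπP)

theorem dvd_map_sub_of_dvd_map_sub (h : IsEulerLift P d θ) (hP : P ≠ 0) (κ : ℤ)
    (hu : P ∣ θ (θ u - κ * u) - κ * (θ u - κ * u)) : P ∣ θ u - κ * u := by
  refine h.dvd_of_dvd_map_sub hP κ hu ?_
  rintro rfl π hπ hπP
  simpa using h.dvd_map hP hπ hπP u

theorem exists_eq_map_sub_add_mul (h : IsEulerLift P d θ) (hP : P ≠ 0) {U : Submodule K K[X]}
    (hθU : ∀ u ∈ U, θ u ∈ U) (hu : u ∈ U) (κ : ℤ) :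
    ∃ v ∈ U, ∃ w ∈ U, u = θ v - κ * v + w ∧ P ∣ θ w - κ * w := by
  have : Module.Finite K (AdjoinRoot P) := (AdjoinRoot.powerBasis hP).finite
  let T : Module.End K U := θ.toLinearMap.restrict hθU - κ • 1
  let ρ : U →ₗ[K] AdjoinRoot P := (AdjoinRoot.mkₐ P).toLinearMap ∘ₗ U.subtype
  have hT (v : U) : (T v : K[X]) = θ v - κ * v := by simp [T]
  have hρ (v : U) : ρ v = 0 ↔ P ∣ v := AdjoinRoot.mk_eq_zero
  obtain ⟨v, w, huvw, hw⟩ := exists_eq_add_of_ker_sq T ρ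
    (fun v hv => by
      obtain ⟨f, hf⟩ := (hρ v).mp hv
      rw [hρ, hT, hf, h.map_mul]
      exact dvd_sub (dvd_mul_right _ _) ((dvd_mul_right _ _).mul_left _))
    (fun v hv => by
      rw [hρ, hT, hT] at hv
      rw [hρ, hT]
      exact h.dvd_map_sub_of_dvd_map_sub hP κ hv) ⟨u, hu⟩
  refine ⟨v, v.2, w, w.2, ?_, ?_⟩
  · rw [← hT, ← Submodule.coe_add, ← huvw]
  · rwa [hρ, hT] at hw

theorem map_eq_zero_of_forall_map_eq (h : IsEulerLift P d θ) (hP : P ≠ 0) {U : Submodule K K[X]}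
    (hθU : ∀ u ∈ U, θ u ∈ U) {κ : ℤ} (hκ : κ ≠ 0) {M : Type*} [AddCommGroup M] [Module K M]
    (l : K[X] →ₗ[K] M) (hlP : ∀ u, P * u ∈ U → l (P * u) = 0) (hlθ : ∀ u ∈ U, l (θ u) = κ • l u)
    (hu : u ∈ U) : l u = 0 := by
  obtain ⟨v, hv, w, hw, rfl, hdvd⟩ := h.exists_eq_map_sub_add_mul hP hθU hu κ
  obtain ⟨f, rfl⟩ := h.dvd_of_dvd_map_sub hP κ hdvd (absurd · hκ)
  rw [map_add, map_sub, hlθ v hv, hlP f hw, ← zsmul_eq_mul, map_zsmul, sub_self, zero_add]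

end IsEulerLift

end EulerLift

section Moments

variable {K : Type*} [Field K] {P d f : K[X]} {a b : K} {θ : Derivation K K[X] K[X]} {k : ℕ}

/-- The moment `∫_a^b P^i f dP` of `f` with respect to `P`. -/
noncomputable def moment (P : K[X]) (a b : K) (i : ℕ) : K[X] →ₗ[K] K :=
  integralBetween a b ∘ₗ LinearMap.mulLeft K (P ^ i * derivative P)

theorem moment_apply (i : ℕ) (f : K[X]) :
    moment P a b i f = integralBetween a b (P ^ i * derivative P * f) :=
  rfl

theorem moment_mul_self (i : ℕ) (f : K[X]) :
    moment P a b i (P * f) = moment P a b (i + 1) f := by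
  rw [moment_apply, moment_apply, pow_succ, mul_right_comm _ P, mul_assoc _ P]

/-- The polynomials all of whose moments with respect to `P` vanish from the `k`-th on. -/
noncomputable def vanishingMoments (P : K[X]) (a b : K) (k : ℕ) : Submodule K K[X] :=
  ⨅ i ≥ k, LinearMap.ker (moment P a b i)

theorem mem_vanishingMoments : f ∈ vanishingMoments P a b k ↔ ∀ i ≥ k, moment P a b i f = 0 := by
  simp only [vanishingMoments, Submodule.mem_iInf, LinearMap.mem_ker]

theorem vanishingMoments_mono : Monotone (vanishingMoments P a b) := fun _ _ hij _ hf =>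
  mem_vanishingMoments.mpr fun n hn => mem_vanishingMoments.mp hf n (hij.trans hn)

theorem mul_mem_vanishingMoments_iff :
    P * f ∈ vanishingMoments P a b k ↔ f ∈ vanishingMoments P a b (k + 1) := by
  simp only [mem_vanishingMoments, moment_mul_self]
  refine ⟨fun h i hi => ?_, fun h i hi => h (i + 1) (by omega)⟩
  obtain ⟨i, rfl⟩ := Nat.exists_eq_add_of_le' (Nat.one_le_of_lt hi)
  exact h i (by omega)

theorem integralBetween_comp_mul (hf : f ∈ vanishingMoments P a b (k + 1)) (q : K[X]) :
    integralBetween a b (P ^ k * q.comp P * derivative P * f) = q.eval 0 * moment P a b k f := by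
  induction q using Polynomial.induction_on' with
  | add q r hq hr => rw [add_comp, mul_add, add_mul, add_mul, map_add, hq, hr, eval_add, add_mul]
  | monomial n c =>
    have h : P ^ k * ((monomial n c).comp P) * derivative P * f =
        c • (P ^ (k + n) * derivative P * f) := by
      rw [monomial_comp, smul_eq_C_mul]
      ring
    rw [h, map_smul, ← moment_apply, smul_eq_mul]
    rcases n with _ | n
    · simp
    · simp [mem_vanishingMoments.mp hf (k + (n + 1)) (by omega)]

variable [CharZero K]

theorem IsEulerLift.moment_map (h : IsEulerLift P d θ) (hPa : P.eval a = 0) (hPb : P.eval b = 0)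
    (hf : f ∈ vanishingMoments P a b (k + 1)) :
    moment P a b k (θ f) = -(k + 1) * moment P a b k f := by
  have hparts : P ^ k * derivative P * θ f = P ^ (k + 1) * d.comp P * derivative f := by
    rw [mul_assoc, h.derivative_mul_map]
    ring
  have hder : derivative (P ^ (k + 1) * d.comp P) * f =
      P ^ k * ((C (k + 1 : K) * d + X * derivative d).comp P) * derivative P * f := by
    rw [derivative_mul, derivative_pow_succ, derivative_comp, add_comp, mul_comp, mul_comp, C_comp,
      X_comp]
    ring
  rw [moment_apply, hparts, integralBetween_mul_derivative (by simp [hPa]) (by simp [hPb]), hder,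
    integralBetween_comp_mul hf]
  simp only [eval_add, eval_mul, eval_C, eval_X, h.eval_zero, zero_mul, mul_one, add_zero]
  ring

theorem IsEulerLift.map_mem_vanishingMoments (h : IsEulerLift P d θ) (hPa : P.eval a = 0)
    (hPb : P.eval b = 0) (hf : f ∈ vanishingMoments P a b k) : θ f ∈ vanishingMoments P a b k := by
  refine mem_vanishingMoments.mpr fun i hi => ?_
  rw [h.moment_map hPa hPb (vanishingMoments_mono (hi.trans i.le_succ) hf),
    mem_vanishingMoments.mp hf i hi, mul_zero]

theorem IsEulerLift.vanishingMoments_succ_le (h : IsEulerLift P d θ) (hP : P ≠ 0)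
    (hPa : P.eval a = 0) (hPb : P.eval b = 0)
    (hk : vanishingMoments P a b (k + 2) ≤ vanishingMoments P a b (k + 1)) :
    vanishingMoments P a b (k + 1) ≤ vanishingMoments P a b k := by
  intro f hf
  have hmk : moment P a b k f = 0 := by
    refine h.map_eq_zero_of_forall_map_eq (κ := -(k + 1 : ℤ)) hP
      (fun u hu => h.map_mem_vanishingMoments hPa hPb hu) (by omega) (moment P a b k)
      (fun u hu => ?_) (fun u hu => ?_) hf
    · rw [moment_mul_self]
      exact mem_vanishingMoments.mp (hk (mul_mem_vanishingMoments_iff.mp hu)) _ le_rfl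
    · simp [h.moment_map hPa hPb hu]
  refine mem_vanishingMoments.mpr fun i hi => ?_
  rcases hi.eq_or_lt with rfl | hi
  · exact hmk
  · exact mem_vanishingMoments.mp hf i hi

theorem IsEulerLift.vanishingMoments_le_zero (h : IsEulerLift P d θ) (hP : P.Monic)
    (hdeg : P.natDegree ≠ 0) (hPa : P.eval a = 0) (hPb : P.eval b = 0) (k : ℕ) :
    vanishingMoments P a b k ≤ vanishingMoments P a b 0 := by
  obtain ⟨N, hN⟩ := exists_forall_le_of_monotone hP hdeg
    (vanishingMoments_mono (P := P) (a := a) (b := b))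
    fun k f hf => mul_mem_vanishingMoments_iff.mpr (vanishingMoments_mono k.le_succ hf)
  have hstep (n : ℕ) : vanishingMoments P a b (n + 1) ≤ vanishingMoments P a b n := by
    rcases le_total n N with hn | hn
    · exact Nat.decreasingInduction
        (motive := fun n _ => vanishingMoments P a b (n + 1) ≤ vanishingMoments P a b n)
        (fun _ _ => h.vanishingMoments_succ_le hP.ne_zero hPa hPb) (hN _) hn
    · exact (hN _).trans (vanishingMoments_mono hn)
  exact antitone_nat_of_succ_le hstep k.zero_le

theorem integralBetween_comp_mul_derivative (hPa : P.eval a = 0) (hPb : P.eval b = 0)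
    (hf : f ∈ vanishingMoments P a b 0) (q : K[X]) :
    integralBetween a b (q.comp P * derivative f) = q.eval 0 * (f.eval b - f.eval a) := by
  have hzero : integralBetween a b ((derivative q).comp P * derivative P * f) = 0 := by
    simpa [mem_vanishingMoments.mp hf 0 le_rfl] using
      integralBetween_comp_mul (vanishingMoments_mono zero_le_one hf) (derivative q)
  have hder : q.comp P * derivative f =
      derivative (q.comp P * f) - (derivative q).comp P * derivative P * f := by
    rw [derivative_mul, derivative_comp]
    ring
  rw [hder, map_sub, hzero, integralBetween_derivative, eval_mul, eval_mul, eval_comp, eval_comp,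
    hPa, hPb]
  ring

theorem IsEulerLift.eval_eq_of_mem_vanishingMoments (h : IsEulerLift P d θ) (hP : P.Monic)
    (hdeg : P.natDegree ≠ 0) (hPa : P.eval a = 0) (hPb : P.eval b = 0)
    (hf : f ∈ vanishingMoments P a b 0) : f.eval a = f.eval b := by
  have heval {c : K} (hc : P.eval c = 0) (v : K[X]) : (θ v).eval c = 0 :=
    dvd_iff_isRoot.mp (h.dvd_map hP.ne_zero (irreducible_X_sub_C c) (dvd_iff_isRoot.mpr hc) v)
  obtain ⟨v, _, w, hw, rfl, hdvd⟩ := h.exists_eq_map_sub_add_mul hP.ne_zero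
    (fun u hu => h.map_mem_vanishingMoments hPa hPb hu) hf 0
  simp only [Int.cast_zero, zero_mul, sub_zero] at hdvd ⊢
  obtain ⟨r, hr⟩ := hdvd
  have hr0 : moment P a b 0 r = 0 := by
    refine mem_vanishingMoments.mp (h.vanishingMoments_le_zero hP hdeg hPa hPb 1
      (mul_mem_vanishingMoments_iff.mp ?_)) 0 le_rfl
    exact hr ▸ h.map_mem_vanishingMoments hPa hPb hw
  have hrw : derivative P * r = d.comp P * derivative w := by
    refine mul_left_cancel₀ hP.ne_zero ?_
    linear_combination (- derivative P) * hr + h.derivative_mul_map w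
  rw [moment_apply, pow_zero, one_mul, hrw, integralBetween_comp_mul_derivative hPa hPb hw,
    h.eval_zero, one_mul, sub_eq_zero] at hr0
  rw [eval_add, eval_add, heval hPa, heval hPb, hr0]

end Moments

section Branches

theorem exists_powerSeries_aeval_eq_X {R : Type*} [CommRing R] {P : R[X]} (hP : P.Monic) {a : R}
    (hPa : P.eval a = 0) (ha : IsUnit ((derivative P).eval a)) :
    ∃ φ : PowerSeries R, aeval φ P = PowerSeries.X ∧ PowerSeries.constantCoeff φ = a := by
  nontriviality R
  let f : (PowerSeries R)[X] := P.map (algebraMap R (PowerSeries R)) - C PowerSeries.X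
  have hf : f.Monic := (hP.map _).sub_of_left <| degree_C_le.trans_lt <| by
    rw [hP.degree_map, ← natDegree_pos_iff_degree_pos]
    by_contra h
    simp [hP.natDegree_eq_zero.mp (by omega)] at hPa
  have heval (x : PowerSeries R) : f.eval x = aeval x P - PowerSeries.X := by
    rw [eval_sub, eval_map_algebraMap, eval_C]
  obtain ⟨φ, hφ, hφa⟩ := HenselianRing.is_henselian (I := Ideal.span {PowerSeries.X}) f hf
    (PowerSeries.C a)
    (by simp [f, hPa])
    (by simpa [f, derivative_map] using (ha.map PowerSeries.C).map (Ideal.Quotient.mk _))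
  refine ⟨φ, sub_eq_zero.mp ((heval φ).symm.trans hφ), ?_⟩
  rw [Ideal.mem_span_singleton, PowerSeries.X_dvd_iff] at hφa
  simpa [sub_eq_zero] using hφa

theorem constantCoeff_aeval {R : Type*} [CommSemiring R] (φ : PowerSeries R) (f : R[X]) :
    PowerSeries.constantCoeff (aeval φ f) = f.eval (PowerSeries.constantCoeff φ) := by
  rw [aeval_def, hom_eval₂]
  exact eval₂_id

theorem coeff_mul_X_mul_derivative {R : Type*} [CommRing R] {D G : PowerSeries R}
    (hD : PowerSeries.constantCoeff D = 1) {j : ℕ} (hG : ∀ i < j, PowerSeries.coeff i G = 0) :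
    PowerSeries.coeff j (D * (PowerSeries.X * PowerSeries.derivative R G)) =
      j * PowerSeries.coeff j G := by
  obtain ⟨H, rfl⟩ := PowerSeries.X_pow_dvd_iff.mpr hG
  have h : D * (PowerSeries.X * PowerSeries.derivative R (PowerSeries.X ^ j * H)) =
      PowerSeries.X ^ j *
        (D * ((j : PowerSeries R) * H + PowerSeries.X * PowerSeries.derivative R H)) := by
    rcases j with _ | j
    · simp
    · simp only [Derivation.leibniz, Derivation.leibniz_pow, PowerSeries.derivative_X, smul_eq_mul,
        nsmul_eq_mul, Nat.add_sub_cancel]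
      ring
  rw [h, PowerSeries.coeff_X_pow_mul', PowerSeries.coeff_X_pow_mul']
  simp [hD]

theorem IsEulerLift.aeval_map {R : Type*} [CommRing R] {P d : R[X]}
    {θ : Derivation R R[X] R[X]} (h : IsEulerLift P d θ) {φ : PowerSeries R}
    (hφ : aeval φ P = PowerSeries.X) (f : R[X]) :
    aeval φ (θ f) = aeval PowerSeries.X d *
      (PowerSeries.X * PowerSeries.derivative R (aeval φ f)) := by
  have hinv : aeval φ (derivative P) * PowerSeries.derivative R φ = 1 := by
    rw [← smul_eq_mul, ← Derivation.map_aeval, hφ, PowerSeries.derivative_X]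
  have hθ : aeval φ (derivative P) * aeval φ (θ f) =
      aeval PowerSeries.X d * PowerSeries.X * aeval φ (derivative f) := by
    simpa only [_root_.map_mul, aeval_comp, hφ] using congrArg (aeval φ) (h.derivative_mul_map f)
  rw [Derivation.map_aeval, smul_eq_mul]
  linear_combination (PowerSeries.derivative R φ) * hθ - aeval φ (θ f) * hinv

theorem transcendental_of_aeval_eq_X {R : Type*} [CommRing R] [IsDomain R] {P : R[X]}
    {φ : PowerSeries R} (hφ : aeval φ P = PowerSeries.X) : Transcendental R φ := by
  have hX : Transcendental R (PowerSeries.X : PowerSeries R) := by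
    have hcoe := isAlgebraic_algHom_iff (a := (X : R[X])) (coeToPowerSeries.algHom R)
      (coe_injective R)
    rw [coeToPowerSeries.algHom_apply, coe_X, PowerSeries.map_X] at hcoe
    exact hcoe.not.mpr (transcendental_X R)
  exact fun hφ' => hX (hφ ▸ Algebra.isAlgebraic_adjoin_singleton_iff.mpr hφ' _
    (aeval_mem_adjoin_singleton R φ))

theorem IsEulerLift.aeval_eq_of_mem_vanishingMoments {K : Type*} [Field K] [CharZero K]
    {P d f : K[X]} {θ : Derivation K K[X] K[X]} (h : IsEulerLift P d θ) (hP : P.Monic)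
    (hdeg : P.natDegree ≠ 0) {φ ψ : PowerSeries K} (hφ : aeval φ P = PowerSeries.X)
    (hψ : aeval ψ P = PowerSeries.X)
    (hf : f ∈ vanishingMoments P (PowerSeries.constantCoeff φ) (PowerSeries.constantCoeff ψ) 0) :
    aeval φ f = aeval ψ f := by
  have hroot {χ : PowerSeries K} (hχ : aeval χ P = PowerSeries.X) :
      P.eval (PowerSeries.constantCoeff χ) = 0 := by
    rw [← constantCoeff_aeval, hχ, PowerSeries.constantCoeff_X]
  have hd : PowerSeries.constantCoeff (aeval PowerSeries.X d) = (1 : K) := by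
    rw [constantCoeff_aeval, PowerSeries.constantCoeff_X, h.eval_zero]
  refine PowerSeries.ext fun j => ?_
  induction j using Nat.strong_induction_on generalizing f with | _ j ih
  rcases j with _ | j
  · simp only [PowerSeries.coeff_zero_eq_constantCoeff_apply, constantCoeff_aeval]
    exact h.eval_eq_of_mem_vanishingMoments hP hdeg (hroot hφ) (hroot hψ) hf
  let δ : K[X] →ₗ[K] PowerSeries K := (aeval φ).toLinearMap - (aeval ψ).toLinearMap
  have hδ (u : K[X]) : δ u = aeval φ u - aeval ψ u := rfl
  rw [← sub_eq_zero, ← map_sub, ← hδ]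
  refine h.map_eq_zero_of_forall_map_eq (κ := (j + 1 : ℕ)) hP.ne_zero
    (fun u hu => h.map_mem_vanishingMoments (hroot hφ) (hroot hψ) hu) (by omega)
    (PowerSeries.coeff (j + 1) ∘ₗ δ) (fun u hu => ?_) (fun u hu => ?_) hf
  · have hu' := h.vanishingMoments_le_zero hP hdeg (hroot hφ) (hroot hψ) 1
      (mul_mem_vanishingMoments_iff.mp hu)
    simp [hδ, hφ, hψ, PowerSeries.coeff_succ_X_mul, ih j j.lt_succ_self hu']
  · have hsub : δ (θ u) = aeval PowerSeries.X d *
        (PowerSeries.X * PowerSeries.derivative K (δ u)) := by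
      rw [hδ, hδ, h.aeval_map hφ, h.aeval_map hψ, map_sub]
      ring
    rw [LinearMap.comp_apply, LinearMap.comp_apply, hsub, coeff_mul_X_mul_derivative hd]
    · simp
    · intro i hi
      rw [hδ, map_sub, ih i hi hu, sub_self]

end Branches

section Luroth

open IntermediateField IntermediateField.algebraAdjoinAdjoin

variable {K : Type*} [Field K]

theorem mem_adjoin_simple_of_mul_sub_eq {L : Type*} [Field L] [Algebra K L] {f w : L}
    (hw : w ∉ (algebraMap K L).range) {α β γ δ : K}
    (h : w * (algebraMap K L γ - f * algebraMap K L δ) = algebraMap K L α - f * algebraMap K L β)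
    (hne : algebraMap K L γ - f * algebraMap K L δ ≠ 0) : f ∈ K⟮w⟯ := by
  have hβ : algebraMap K L β - w * algebraMap K L δ ≠ 0 := by
    intro hβ
    by_cases hδ : δ = 0
    · rw [hδ, map_zero, mul_zero, sub_zero] at hβ h hne
      rw [hβ, mul_zero, sub_zero] at h
      exact hw ⟨α / γ, by rw [map_div₀, ← h, mul_div_cancel_right₀ _ hne]⟩
    · have hδ' : algebraMap K L δ ≠ 0 := (_root_.map_ne_zero _).mpr hδ
      exact hw ⟨β / δ, by rw [map_div₀, sub_eq_zero.mp hβ, mul_div_cancel_right₀ _ hδ']⟩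
  have hf : f = (algebraMap K L α - w * algebraMap K L γ) /
      (algebraMap K L β - w * algebraMap K L δ) := by
    rw [eq_div_iff hβ]
    linear_combination h
  have hmem (r s : K) : algebraMap K L r - w * algebraMap K L s ∈ K⟮w⟯ :=
    sub_mem (_root_.algebraMap_mem _ _)
      (mul_mem (mem_adjoin_simple_self K w) (_root_.algebraMap_mem _ _))
  exact hf ▸ div_mem (hmem α γ) (hmem β δ)

variable {E : IntermediateField K (RatFunc K)}

theorem exists_coeff_minpoly_X_notMem_range (hE : E ≠ ⊥) :
    ∃ i, ((minpoly E (RatFunc.X : RatFunc K)).coeff i : RatFunc K) ∉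
      (algebraMap K (RatFunc K)).range := by
  by_contra! h
  obtain ⟨g, hg⟩ : minpoly E (RatFunc.X : RatFunc K) ∈ lifts (algebraMap K E) :=
    (lifts_iff_coeff_lifts _).mpr fun n => (h n).imp fun c hc => Subtype.ext hc
  have hmin := minpoly.ne_zero (RatFunc.IntermediateField.isAlgebraic_X hE).isIntegral
  refine RatFunc.transcendental_X (K := K) ⟨g, fun hg0 => hmin (by rw [← hg, hg0]; simp), ?_⟩
  have h0 := minpoly.aeval E (RatFunc.X : RatFunc K)
  rwa [← hg, coe_mapRingHom, aeval_map_algebraMap] at h0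

theorem adjoin_coeff_minpoly_X_eq {i : ℕ}
    (hi : ((minpoly E (RatFunc.X : RatFunc K)).coeff i : RatFunc K) ∉
      (algebraMap K (RatFunc K)).range) :
    K⟮((minpoly E (RatFunc.X : RatFunc K)).coeff i : RatFunc K)⟯ = E := by
  obtain ⟨f, rfl⟩ : ∃ f, E = K⟮f⟯ := ⟨_, RatFunc.Luroth.eq_adjoin_generator⟩
  refine le_antisymm (adjoin_simple_le_iff.mpr (SetLike.coe_mem _)) (adjoin_simple_le_iff.mpr ?_)
  have hf : ¬∃ c, f = RatFunc.C c := by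
    rintro ⟨c, rfl⟩
    have hbot : K⟮RatFunc.C c⟯ = ⊥ := adjoin_simple_eq_bot_iff.mpr (_root_.algebraMap_mem _ c)
    exact hi (mem_bot.mp (hbot.le (SetLike.coe_mem _)))
  let p := f.minpolyX K⟮f⟯
  have hp : Irreducible p := RatFunc.irreducible_minpolyX f hf
  have hlc : p.leadingCoeff ≠ 0 := leadingCoeff_ne_zero.mpr hp.ne_zero
  have hcoeff : (minpoly K⟮f⟯ (RatFunc.X : RatFunc K)).coeff i * p.leadingCoeff = p.coeff i := by
    rw [← minpoly.eq_of_irreducible hp f.minpolyX_aeval_X, coeff_mul_C,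
      inv_mul_cancel_right₀ hlc]
  have hp_coeff (n : ℕ) : (p.coeff n : RatFunc K) =
      algebraMap K _ (f.num.coeff n) - f * algebraMap K _ (f.denom.coeff n) := by
    simp [p]
  refine mem_adjoin_simple_of_mul_sub_eq hi (α := f.num.coeff i) (β := f.denom.coeff i)
    (γ := f.num.coeff p.natDegree) (δ := f.denom.coeff p.natDegree) ?_ ?_
  · rw [← hp_coeff, ← hp_coeff, ← hcoeff]; rfl
  · rw [← hp_coeff]
    exact fun h => hlc (Subtype.ext h)

theorem ne_bot_of_algebraMap_mem {P : K[X]} (hP : P.natDegree ≠ 0)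
    (hPE : algebraMap K[X] (RatFunc K) P ∈ E) : E ≠ ⊥ := by
  rintro rfl
  obtain ⟨c, hc⟩ := mem_bot.mp hPE
  rw [IsScalarTower.algebraMap_apply K K[X] (RatFunc K)] at hc
  rw [← RatFunc.algebraMap_injective K hc] at hP
  exact hP (natDegree_C c)

/- The minimal polynomial of `X` over `E` divides `P(Y) - P(X)`, which is monic in `Y`. -/
theorem exists_coeff_minpoly_X_eq_algebraMap {P : K[X]} (hP : P.Monic) (hdeg : P.natDegree ≠ 0)
    (hPE : algebraMap K[X] (RatFunc K) P ∈ E) (i : ℕ) :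
    ∃ w : K[X], ((minpoly E (RatFunc.X : RatFunc K)).coeff i : RatFunc K) =
      algebraMap K[X] (RatFunc K) w := by
  let m := minpoly E (RatFunc.X : RatFunc K)
  have hm : m.Monic := minpoly.monic
    (RatFunc.IntermediateField.isAlgebraic_X (ne_bot_of_algebraMap_mem hdeg hPE)).isIntegral
  have hmonic : (P.map C - C P : K[X][X]).Monic := by
    refine (hP.map C).sub_of_left (degree_C_le.trans_lt ?_)
    rwa [degree_map, ← natDegree_pos_iff_degree_pos, Nat.pos_iff_ne_zero]
  have hdvd : m.map (algebraMap E (RatFunc K)) ∣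
      (P.map C - C P : K[X][X]).map (algebraMap K[X] (RatFunc K)) := by
    have hm : m ∣ P.map (algebraMap K E) - C ⟨_, hPE⟩ := minpoly.dvd _ _ (by simp)
    convert Polynomial.map_dvd (algebraMap E (RatFunc K)) hm using 1
    simp [Polynomial.map_map, ← IsScalarTower.algebraMap_eq]
  obtain ⟨g, hg⟩ := IsIntegrallyClosed.eq_map_mul_C_of_dvd (RatFunc K) hmonic hdvd
  refine ⟨g.coeff i, ?_⟩
  rw [(hm.map _).leadingCoeff, C_1, mul_one] at hg
  simpa [m] using congrArg (coeff · i) hg.symm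

theorem exists_eq_adjoin_algebraMap {P : K[X]} (hP : P.Monic) (hdeg : P.natDegree ≠ 0)
    (hPE : algebraMap K[X] (RatFunc K) P ∈ E) :
    ∃ W : K[X], E = K⟮algebraMap K[X] (RatFunc K) W⟯ := by
  obtain ⟨i, hi⟩ := exists_coeff_minpoly_X_notMem_range (ne_bot_of_algebraMap_mem hdeg hPE)
  obtain ⟨W, hW⟩ := exists_coeff_minpoly_X_eq_algebraMap hP hdeg hPE i
  exact ⟨W, by rw [← hW, adjoin_coeff_minpoly_X_eq hi]⟩

theorem exists_eq_comp_of_mul_comp_eq {q A B W : K[X]} (hBW : B.comp W ≠ 0)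
    (h : q * B.comp W = A.comp W) : ∃ D : K[X], q = D.comp W := by
  by_cases hW : W.natDegree = 0
  · rcases eq_or_ne q 0 with rfl | hq
    · exact ⟨0, zero_comp.symm⟩
    have hdeg := congrArg natDegree h
    rw [natDegree_mul hq hBW, natDegree_comp, natDegree_comp, hW, mul_zero, mul_zero, add_zero]
      at hdeg
    exact ⟨C (q.coeff 0), by rw [C_comp, ← eq_C_of_natDegree_eq_zero hdeg]⟩
  have hB : B ≠ 0 := fun hB => hBW (by rw [hB, zero_comp])
  have hcomp : (A % B).comp W = (q - (A / B).comp W) * B.comp W := by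
    rw [sub_mul, h, ← mul_comp, ← sub_comp, EuclideanDomain.mod_eq_sub_mul_div, mul_comm]
  refine ⟨A / B, sub_eq_zero.mp (of_not_not fun hq => ?_)⟩
  have hmod : A % B ≠ 0 := fun h0 => mul_ne_zero hq hBW (by rw [← hcomp, h0, zero_comp])
  have hlt : (A % B).natDegree * W.natDegree < B.natDegree * W.natDegree :=
    Nat.mul_lt_mul_of_pos_right (natDegree_lt_natDegree hmod (degree_mod_lt A hB))
      (Nat.pos_of_ne_zero hW)
  rw [← natDegree_comp, hcomp, natDegree_mul hq hBW, natDegree_comp] at hlt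
  omega

theorem exists_eq_comp_of_mem_adjoin {q W : K[X]}
    (hq : algebraMap K[X] (RatFunc K) q ∈ K⟮algebraMap K[X] (RatFunc K) W⟯) :
    ∃ A : K[X], q = A.comp W := by
  obtain ⟨A, B, hAB⟩ := (mem_adjoin_simple_iff K _).mp hq
  simp only [aeval_algebraMap_apply, ← comp_eq_aeval] at hAB
  by_cases hBW : B.comp W = 0
  · rw [hBW, map_zero, div_zero, map_eq_zero_iff _ (RatFunc.algebraMap_injective K)] at hAB
    exact ⟨0, by rw [hAB, zero_comp]⟩
  rw [eq_div_iff (RatFunc.algebraMap_ne_zero hBW), ← map_mul] at hAB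
  exact exists_eq_comp_of_mul_comp_eq hBW (RatFunc.algebraMap_injective K hAB)

theorem exists_forall_eq_comp_of_apply_eq {F : Type*} [Field F] [Algebra K F]
    {σ τ : K[X] →ₐ[K] F} (hσ : Function.Injective σ) (hτ : Function.Injective τ) {P : K[X]}
    (hP : P.Monic) (hdeg : P.natDegree ≠ 0) (hστ : σ P = τ P) :
    ∃ W, σ W = τ W ∧ ∀ q, σ q = τ q → ∃ A : K[X], q = A.comp W := by
  let lift (ρ : K[X] →ₐ[K] F) (hρ : Function.Injective ρ) : RatFunc K →ₐ[K] F :=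
    RatFunc.liftAlgHom ρ (nonZeroDivisors_le_comap_nonZeroDivisors_of_injective _ hρ)
  have hlift (ρ : K[X] →ₐ[K] F) (hρ : Function.Injective ρ) (q : K[X]) :
      lift ρ hρ (algebraMap K[X] (RatFunc K) q) = ρ q := by
    simpa using RatFunc.liftAlgHom_apply_div ρ
      (nonZeroDivisors_le_comap_nonZeroDivisors_of_injective _ hρ) q 1
  let E : IntermediateField K (RatFunc K) :=
    (AlgHom.equalizer (lift σ hσ) (lift τ hτ)).toIntermediateField fun x hx => by
      rw [AlgHom.mem_equalizer] at hx ⊢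
      rw [map_inv₀, map_inv₀, hx]
  have hE (q : K[X]) : algebraMap K[X] (RatFunc K) q ∈ E ↔ σ q = τ q := by
    rw [← hlift σ hσ, ← hlift τ hτ]
    rfl
  obtain ⟨W, hW⟩ := exists_eq_adjoin_algebraMap hP hdeg ((hE P).mpr hστ)
  exact ⟨W, (hE W).mp (hW ▸ mem_adjoin_simple_self K _), fun q hq =>
    exists_eq_comp_of_mem_adjoin (hW ▸ (hE q).mpr hq)⟩

end Luroth

section MomentProblem

variable {K : Type*} [Field K] [CharZero K]

theorem mem_vanishingMoments_zero_of_forall_eval_eq {P Q : K[X]} {a b : K}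
    (hPab : P.eval a = P.eval b)
    (hmom : ∀ i : ℕ, ∀ R : K[X],
      derivative R = P ^ i * derivative Q → R.eval a = R.eval b) (r : K) :
    Q ∈ vanishingMoments (C r * (P - C (P.eval a))) a b 0 := by
  have hpow (i : ℕ) : integralBetween a b (P ^ i * derivative Q) = 0 := by
    rw [← derivative_antiderivative (P ^ i * derivative Q), integralBetween_derivative,
      hmom i _ (derivative_antiderivative _), sub_self]
  have hcomp (q : K[X]) : integralBetween a b (q.comp P * derivative Q) = 0 := by
    induction q using Polynomial.induction_on' with
    | add p q hp hq => rw [add_comp, add_mul, map_add, hp, hq, add_zero]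
    | monomial n c =>
      rw [← C_mul_X_pow_eq_monomial, C_mul_comp, X_pow_comp, mul_assoc, ← smul_eq_C_mul, map_smul,
        hpow, smul_zero]
  refine mem_vanishingMoments.mpr fun i _ => ?_
  let P₀ := C r * (P - C (P.eval a))
  have hparts : integralBetween a b (P₀ ^ (i + 1) * derivative Q) =
      -((i + 1) * moment P₀ a b i Q) := by
    rw [integralBetween_mul_derivative (by simp [P₀]) (by simp [P₀, hPab]), derivative_pow_succ,
      mul_assoc, mul_assoc, ← smul_eq_C_mul, map_smul, smul_eq_mul, moment_apply, mul_assoc]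
  have hzero : integralBetween a b (P₀ ^ (i + 1) * derivative Q) = 0 := by
    have hP₀ : P₀ = (C r * (X - C (P.eval a))).comp P := by simp [P₀]
    rw [hP₀, ← pow_comp, hcomp]
  rw [hzero, zero_eq_neg] at hparts
  exact (mul_eq_zero.mp hparts).resolve_left i.cast_add_one_ne_zero

theorem exists_eq_comp_of_mem_vanishingMoments {P Q : K[X]} {a b : K} (hP : P.Monic)
    (hPa : P.eval a = 0) (hPb : P.eval b = 0) (ha : (derivative P).eval a ≠ 0)
    (hb : (derivative P).eval b ≠ 0) (hQ : Q ∈ vanishingMoments P a b 0) :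
    ∃ Pt Qt W : K[X], P = Pt.comp W ∧ Q = Qt.comp W ∧ W.eval a = W.eval b := by
  have hdeg : P.natDegree ≠ 0 := fun h => ha (by
    rw [eq_C_of_natDegree_eq_zero h, derivative_C, eval_zero])
  have hP' : derivative P ≠ 0 := fun h => ha (by rw [h, eval_zero])
  obtain ⟨d, θ, h⟩ := exists_isEulerLift hP'
  obtain ⟨φ, hφ, rfl⟩ := exists_powerSeries_aeval_eq_X hP hPa ha.isUnit
  obtain ⟨ψ, hψ, rfl⟩ := exists_powerSeries_aeval_eq_X hP hPb hb.isUnit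
  have hQφψ := h.aeval_eq_of_mem_vanishingMoments hP hdeg hφ hψ hQ
  let ι := Algebra.algHom K (PowerSeries K) (FractionRing (PowerSeries K))
  have hι : Function.Injective ι := IsFractionRing.injective _ _
  have hinj {χ : PowerSeries K} (hχ : aeval χ P = PowerSeries.X) :
      Function.Injective (ι.comp (aeval χ)) :=
    hι.comp (transcendental_iff_injective.mp (transcendental_of_aeval_eq_X hχ))
  obtain ⟨W, hW, hall⟩ := exists_forall_eq_comp_of_apply_eq (hinj hφ) (hinj hψ) hP hdeg
    (congrArg ι (hφ.trans hψ.symm))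
  obtain ⟨Pt, hPt⟩ := hall P (congrArg ι (hφ.trans hψ.symm))
  obtain ⟨Qt, hQt⟩ := hall Q (congrArg ι hQφψ)
  refine ⟨Pt, Qt, W, hPt, hQt, ?_⟩
  rw [← constantCoeff_aeval, ← constantCoeff_aeval]
  exact congrArg _ (hι hW)

end MomentProblem

theorem polynomial_moment_problem_regular_points_general {K : Type*} [Field K] [CharZero K]
    (P Q : K[X]) (a b : K) (hPab : P.eval a = P.eval b)
    (ha : P.derivative.eval a ≠ 0) (hb : P.derivative.eval b ≠ 0)
    (hmom : ∀ i : ℕ, ∀ R : K[X],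
      R.derivative = P ^ i * Q.derivative → R.eval a = R.eval b) :
    ∃ Pt Qt W : K[X], P = Pt.comp W ∧ Q = Qt.comp W ∧ W.eval a = W.eval b := by
  have hP : P - C (P.eval a) ≠ 0 := fun h => ha (by rw [sub_eq_zero.mp h, derivative_C, eval_zero])
  let l := (P - C (P.eval a)).leadingCoeff
  have hl : l ≠ 0 := leadingCoeff_ne_zero.mpr hP
  have hmonic : (C l⁻¹ * (P - C (P.eval a))).Monic := by
    rw [mul_comm]
    exact monic_mul_leadingCoeff_inv hP
  have hder (c : K) : (derivative (C l⁻¹ * (P - C (P.eval a)))).eval c =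
      l⁻¹ * (derivative P).eval c := by simp
  obtain ⟨Pt, Qt, W, hPt, hQt, hW⟩ := exists_eq_comp_of_mem_vanishingMoments
    hmonic (by simp) (by rw [eval_mul, eval_sub, ← hPab, eval_C, eval_C, sub_self, mul_zero])
    (hder a ▸ mul_ne_zero (inv_ne_zero hl) ha) (hder b ▸ mul_ne_zero (inv_ne_zero hl) hb)
    (mem_vanishingMoments_zero_of_forall_eval_eq hPab hmom l⁻¹)
  refine ⟨C l * Pt + C (P.eval a), Qt, W, ?_, hQt, hW⟩
  rw [add_comp, C_mul_comp, C_comp, ← hPt, ← mul_assoc, ← C_mul, mul_inv_cancel₀ hl, C_1, one_mul,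
    sub_add_cancel]

/-- Christopher's theorem (regular endpoints case of the polynomial moment
problem): if `a, b` are not critical points of `P`, `P a = P b`, `a ≠ b`, and
all moments `∫_a^b P^i Q' dz` vanish, then `P = P̃ ∘ W`, `Q = Q̃ ∘ W` with
`W a = W b`. -/
theorem polynomial_moment_problem_regular_points
    (P Q : ℂ[X]) (a b : ℂ) (hab : a ≠ b) (hPab : P.eval a = P.eval b)
    (ha : P.derivative.eval a ≠ 0) (hb : P.derivative.eval b ≠ 0)
    (hmom : ∀ i : ℕ, ∀ R : ℂ[X],
      R.derivative = P ^ i * Q.derivative → R.eval a = R.eval b) :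
    ∃ Pt Qt W : ℂ[X], P = Pt.comp W ∧ Q = Qt.comp W ∧ W.eval a = W.eval b :=
  polynomial_moment_problem_regular_points_general P Q a b hPab ha hb hmom
end

section
/- Let P and Q be complex polynomials with P nonconstant, regarded as elements of ℂ(z) = RatFunc ℂ, and suppose that the intermediate field ℂ(P,Q) generated by P and Q over ℂ is a proper subfield of ℂ(z). Then there exists a complex polynomial W with deg W ≥ 2 such that ℂ(P,Q) = ℂ(W); in particular there exist complex polynomials P̃ and Q̃ such that P = P̃ ∘ W and Q = Q̃ ∘ W, where P̃ and Q̃ have no common right divisor of degree at least 2 in the composition algebra. -/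
/-!
A nonconstant `P` has a pole at infinity. By Lüroth, `K(P, Q) = K(g)`, and after a Möbius change of
generator `g` has a pole at infinity too. Writing `P = a(g) / b(g)`, comparison of the poles at
infinity gives `deg b < deg a`, so `a(T) - P * b(T)` is, up to a constant factor, a monic polynomial
over `K[X]` with root `g`; as `K[X]` is integrally closed, `g` is a polynomial `W`. For any
polynomial `F` in `K(W)`, division with remainder gives `F = q(W) + ε` with `ε` vanishing at
infinity, and a polynomial vanishing at infinity is zero. Finally `[K(X) : K(W)] = deg W` excludes a
nontrivial common right divisor `V` of the outer factors, since then `K(W) = K(V ∘ W)`.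
-/

open Polynomial IntermediateField

section Integrality

variable {R A B : Type*} [CommRing R] [CommRing A] [CommRing B] [Algebra R A] [Algebra R B]
  [Algebra A B] [IsScalarTower R A B]

lemma isIntegral_of_aeval_eq_algebraMap_mul_aeval {p q : R[X]} (hp : p.Monic)
    (hqp : q.degree < p.degree) {y : A} {x : B}
    (h : aeval x p = algebraMap A B y * aeval x q) : IsIntegral A x := by
  nontriviality A
  refine ⟨p.map (algebraMap R A) - y • q.map (algebraMap R A), ?_, ?_⟩
  · refine (hp.map _).sub_of_left ?_
    calc (y • q.map (algebraMap R A)).degree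
        ≤ q.degree := (degree_smul_le y _).trans degree_map_le
      _ < p.degree := hqp
      _ = (p.map (algebraMap R A)).degree := (hp.degree_map _).symm
  · simp [← aeval_def, h]

end Integrality

section Valuation

variable {K L Γ : Type*} [Field K] [Field L] [Algebra K L] [LinearOrderedCommGroupWithZero Γ]
  {v : Valuation L Γ} {g : L}

lemma exists_adjoin_simple_eq_and_one_lt_valuation
    (hres : ∀ x : L, v x ≤ 1 → ∃ c : K, v (x - algebraMap K L c) < 1)
    (hg : g ∉ (⊥ : IntermediateField K L)) :
    ∃ g' : L, K⟮g'⟯ = K⟮g⟯ ∧ 1 < v g' := by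
  rcases lt_or_ge 1 (v g) with hlt | hle
  · exact ⟨g, rfl, hlt⟩
  obtain ⟨c, hc⟩ := hres g hle
  have hne : g - algebraMap K L c ≠ 0 := fun h ↦ hg (mem_bot.2 ⟨c, (sub_eq_zero.1 h).symm⟩)
  refine ⟨(g - algebraMap K L c)⁻¹, le_antisymm ?_ ?_,
    (v.one_lt_val_iff (inv_ne_zero hne)).2 (by rwa [inv_inv])⟩ <;>
    rw [adjoin_simple_le_iff]
  · exact inv_mem (sub_mem (mem_adjoin_simple_self K g) (K⟮g⟯.algebraMap_mem c))
  · simpa using add_mem (inv_mem (mem_adjoin_simple_self K (g - algebraMap K L c)⁻¹))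
      (IntermediateField.algebraMap_mem _ c)

variable [v.IsTrivialOn K]

lemma valuation_aeval_lt_valuation_aeval_iff (hg : 1 < v g) {p q : K[X]} :
    v (aeval g p) < v (aeval g q) ↔ p.degree < q.degree := by
  have hv {r : K[X]} (hr : r ≠ 0) : v (aeval g r) = v g ^ r.natDegree :=
    valuation_aeval_eq_valuation_X_pow_natDegree_of_one_lt_valuation_X g hg hr
  rcases eq_or_ne q 0 with rfl | hq
  · simp
  rcases eq_or_ne p 0 with rfl | hp
  · simp [hv hq, pow_pos (zero_lt_one.trans hg), bot_lt_iff_ne_bot, hq]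
  rw [hv hp, hv hq, pow_lt_pow_iff_right₀ hg, natDegree_lt_natDegree_iff hp]

lemma exists_valuation_sub_aeval_lt_one (hg : 1 < v g) {x : L} (hx : x ∈ K⟮g⟯) :
    ∃ q : K[X], v (x - aeval g q) < 1 := by
  obtain ⟨a, b, rfl⟩ := (mem_adjoin_simple_iff K x).1 hx
  rcases eq_or_ne b 0 with rfl | hb
  · exact ⟨0, by simp⟩
  have hmod : v (aeval g (a % b)) < v (aeval g b) :=
    (valuation_aeval_lt_valuation_aeval_iff hg).2 (EuclideanDomain.mod_lt a hb)
  have hvb : 0 < v (aeval g b) := zero_le.trans_lt hmod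
  have hdiv : aeval g a / aeval g b - aeval g (a / b) = aeval g (a % b) / aeval g b := by
    have hb' : aeval g b ≠ 0 := v.pos_iff.1 hvb
    rw [EuclideanDomain.mod_eq_sub_mul_div, map_sub, map_mul]
    field_simp
  exact ⟨a / b, by rwa [hdiv, map_div₀, div_lt_one₀ hvb]⟩

lemma isIntegral_of_one_lt_valuation_of_mem_adjoin_simple {A : Type*} [CommRing A] [Algebra K A]
    [Algebra A L] [IsScalarTower K A L] (hg : 1 < v g) {y : A} (hy : 1 < v (algebraMap A L y))
    (hmem : algebraMap A L y ∈ K⟮g⟯) : IsIntegral A g := by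
  obtain ⟨a, b, hab⟩ := (mem_adjoin_simple_iff K _).1 hmem
  have hb : aeval g b ≠ 0 := by
    intro hb
    simp [hab, hb] at hy
  have hlt : v (aeval g b) < v (aeval g a) := by
    rwa [hab, map_div₀, one_lt_div₀ (v.pos_iff.2 hb)] at hy
  have ha : a ≠ 0 := by
    rintro rfl
    simp at hlt
  have hdeg : b.degree < a.degree := (valuation_aeval_lt_valuation_aeval_iff hg).1 hlt
  have hlc : a.leadingCoeff⁻¹ ≠ 0 := inv_ne_zero (leadingCoeff_ne_zero.2 ha)
  refine isIntegral_of_aeval_eq_algebraMap_mul_aeval (p := a * C a.leadingCoeff⁻¹)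
    (q := b * C a.leadingCoeff⁻¹) (y := y) (monic_mul_leadingCoeff_inv ha) ?_ ?_
  · rwa [degree_mul_C hlc, degree_mul_C hlc]
  · rw [map_mul, map_mul, ← mul_assoc, hab, div_mul_cancel₀ _ hb]

end Valuation

section InftyValuation

variable {K : Type*} [Field K] [DecidableEq (RatFunc K)]

lemma one_lt_inftyValuation_algebraMap_iff {P : K[X]} :
    1 < RatFunc.inftyValuation K (algebraMap K[X] (RatFunc K) P) ↔ 1 ≤ P.natDegree := by
  rcases eq_or_ne P 0 with rfl | hP
  · simp
  rw [RatFunc.inftyValuation_apply, RatFunc.inftyValuation.polynomial K hP, ← WithZero.exp_zero,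
    WithZero.exp_lt_exp, Nat.cast_pos, Nat.one_le_iff_ne_zero, Nat.pos_iff_ne_zero]

lemma eq_zero_of_inftyValuation_algebraMap_lt_one {P : K[X]}
    (hP : RatFunc.inftyValuation K (algebraMap K[X] (RatFunc K) P) < 1) : P = 0 := by
  by_contra hP0
  rw [RatFunc.inftyValuation_apply, RatFunc.inftyValuation.polynomial K hP0, ← WithZero.exp_zero,
    WithZero.exp_lt_exp] at hP
  omega

lemma exists_inftyValuation_sub_algebraMap_lt_one {x : RatFunc K}
    (hx : RatFunc.inftyValuation K x ≤ 1) :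
    ∃ c : K, RatFunc.inftyValuation K (x - algebraMap K (RatFunc K) c) < 1 := by
  have hX : 1 < RatFunc.inftyValuation K (algebraMap K[X] (RatFunc K) X) :=
    one_lt_inftyValuation_algebraMap_iff.2 natDegree_X.ge
  have hmem : x ∈ K⟮algebraMap K[X] (RatFunc K) X⟯ := by
    rw [RatFunc.algebraMap_X, RatFunc.adjoin_X]
    exact mem_top
  obtain ⟨q, hq⟩ := exists_valuation_sub_aeval_lt_one hX hmem
  rw [aeval_algebraMap_apply, aeval_X_left_apply] at hq
  have hq_le : RatFunc.inftyValuation K (algebraMap K[X] (RatFunc K) q) ≤ 1 := by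
    simpa using Valuation.map_sub_le _ hx hq.le
  have hdeg : q.natDegree = 0 := by
    have := one_lt_inftyValuation_algebraMap_iff.not.1 hq_le.not_gt
    omega
  obtain ⟨c, rfl⟩ := natDegree_eq_zero.1 hdeg
  exact ⟨c, by simpa using hq⟩

end InftyValuation

section PolynomialGenerator

variable {K : Type*} [Field K]

lemma exists_eq_comp_of_algebraMap_mem_adjoin {F W : K[X]} (hW : 1 ≤ W.natDegree)
    (hF : algebraMap K[X] (RatFunc K) F ∈ K⟮algebraMap K[X] (RatFunc K) W⟯) :
    ∃ A : K[X], F = A.comp W := by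
  classical
  obtain ⟨A, hA⟩ :=
    exists_valuation_sub_aeval_lt_one (one_lt_inftyValuation_algebraMap_iff.2 hW) hF
  rw [aeval_algebraMap_apply, ← comp_eq_aeval, ← map_sub] at hA
  exact ⟨A, sub_eq_zero.1 (eq_zero_of_inftyValuation_algebraMap_lt_one hA)⟩

lemma algebraMap_comp_mem_adjoin (A W : K[X]) :
    algebraMap K[X] (RatFunc K) (A.comp W) ∈ K⟮algebraMap K[X] (RatFunc K) W⟯ := by
  rw [comp_eq_aeval, ← aeval_algebraMap_apply]
  exact algebra_adjoin_le_adjoin K _ (aeval_mem_adjoin_singleton K _)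

lemma exists_eq_adjoin_algebraMap_of_algebraMap_mem {E : IntermediateField K (RatFunc K)}
    {P : K[X]} (hP : 1 ≤ P.natDegree) (hPE : algebraMap K[X] (RatFunc K) P ∈ E) :
    ∃ W : K[X], 1 ≤ W.natDegree ∧ E = K⟮algebraMap K[X] (RatFunc K) W⟯ := by
  classical
  have hE : E ≠ ⊥ := by
    rintro rfl
    obtain ⟨c, hc⟩ := mem_bot.1 hPE
    obtain rfl : C c = P := RatFunc.algebraMap_injective K (by simpa using hc)
    simp at hP
  obtain ⟨g, hgE, hg⟩ := exists_adjoin_simple_eq_and_one_lt_valuation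
    (fun _ ↦ exists_inftyValuation_sub_algebraMap_lt_one) (RatFunc.Luroth.generator_spec hE)
  rw [← RatFunc.Luroth.eq_adjoin_generator] at hgE
  have hint : IsIntegral K[X] g := isIntegral_of_one_lt_valuation_of_mem_adjoin_simple hg
    (one_lt_inftyValuation_algebraMap_iff.2 hP) (hgE ▸ hPE)
  obtain ⟨W, rfl⟩ := IsIntegrallyClosed.isIntegral_iff.1 hint
  exact ⟨W, one_lt_inftyValuation_algebraMap_iff.1 hg, hgE.symm⟩

lemma finrank_adjoin_algebraMap (W : K[X]) :
    Module.finrank K⟮algebraMap K[X] (RatFunc K) W⟯ (RatFunc K) = W.natDegree := by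
  simp [RatFunc.finrank_eq_max_natDegree]

lemma adjoin_algebraMap_eq_top_iff {W : K[X]} :
    K⟮algebraMap K[X] (RatFunc K) W⟯ = ⊤ ↔ W.natDegree = 1 := by
  rw [← finrank_eq_one_iff_eq_top, finrank_adjoin_algebraMap]

lemma natDegree_eq_one_of_algebraMap_mem_adjoin_comp {V W : K[X]} (hW : 1 ≤ W.natDegree)
    (h : algebraMap K[X] (RatFunc K) W ∈ K⟮algebraMap K[X] (RatFunc K) (V.comp W)⟯) :
    V.natDegree = 1 := by
  have hfield : K⟮algebraMap K[X] (RatFunc K) (V.comp W)⟯ = K⟮algebraMap K[X] (RatFunc K) W⟯ :=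
    le_antisymm (adjoin_simple_le_iff.2 (algebraMap_comp_mem_adjoin V W))
      (adjoin_simple_le_iff.2 h)
  have hdeg : V.natDegree * W.natDegree = W.natDegree := by
    rw [← natDegree_comp, ← finrank_adjoin_algebraMap, hfield, finrank_adjoin_algebraMap]
  exact (Nat.mul_eq_right (Nat.one_le_iff_ne_zero.1 hW)).1 hdeg

end PolynomialGenerator

theorem adjoin_pair_eq_adjoin_polynomial_general {K : Type*} [Field K]
    (P Q : K[X]) (hP : 1 ≤ P.natDegree) :
    ∃ W : K[X], 1 ≤ W.natDegree ∧
      IntermediateField.adjoin K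
          ({algebraMap K[X] (RatFunc K) P, algebraMap K[X] (RatFunc K) Q} : Set (RatFunc K)) =
        IntermediateField.adjoin K ({algebraMap K[X] (RatFunc K) W} : Set (RatFunc K)) ∧
      ∃ Pt Qt : K[X], P = Pt.comp W ∧ Q = Qt.comp W ∧
        ¬ ∃ A B V : K[X], 2 ≤ V.natDegree ∧ Pt = A.comp V ∧ Qt = B.comp V := by
  set E := IntermediateField.adjoin K
    ({algebraMap K[X] (RatFunc K) P, algebraMap K[X] (RatFunc K) Q} : Set (RatFunc K)) with hE
  have hPE : algebraMap K[X] (RatFunc K) P ∈ E := subset_adjoin K _ (by simp)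
  have hQE : algebraMap K[X] (RatFunc K) Q ∈ E := subset_adjoin K _ (by simp)
  obtain ⟨W, hW, hEW⟩ := exists_eq_adjoin_algebraMap_of_algebraMap_mem hP hPE
  obtain ⟨Pt, hPt⟩ := exists_eq_comp_of_algebraMap_mem_adjoin hW (hEW ▸ hPE)
  obtain ⟨Qt, hQt⟩ := exists_eq_comp_of_algebraMap_mem_adjoin hW (hEW ▸ hQE)
  refine ⟨W, hW, hEW, Pt, Qt, hPt, hQt, ?_⟩
  rintro ⟨A, B, V, hV, rfl, rfl⟩
  have hEV : E ≤ K⟮algebraMap K[X] (RatFunc K) (V.comp W)⟯ := by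
    rw [hE, hPt, hQt, comp_assoc, comp_assoc, adjoin_le_iff, Set.pair_subset_iff]
    exact ⟨algebraMap_comp_mem_adjoin A _, algebraMap_comp_mem_adjoin B _⟩
  have hV_one : V.natDegree = 1 := natDegree_eq_one_of_algebraMap_mem_adjoin_comp hW
    (hEV (hEW ▸ mem_adjoin_simple_self K _))
  omega

/-- If `P, Q` are complex polynomials with `P` nonconstant and `ℂ(P,Q)` is a
proper subfield of `ℂ(z)`, then `ℂ(P,Q) = ℂ(W)` for a polynomial `W` of degree
at least 2; in particular `P = P̃ ∘ W`, `Q = Q̃ ∘ W`, where `P̃`, `Q̃` have no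
common right divisor of degree at least 2 in the composition algebra. -/
theorem adjoin_pair_eq_adjoin_polynomial
    (P Q : ℂ[X]) (hP : 1 ≤ P.natDegree)
    (h : IntermediateField.adjoin ℂ
        ({algebraMap ℂ[X] (RatFunc ℂ) P, algebraMap ℂ[X] (RatFunc ℂ) Q} : Set (RatFunc ℂ)) ≠ ⊤) :
    ∃ W : ℂ[X], 2 ≤ W.natDegree ∧
      IntermediateField.adjoin ℂ
          ({algebraMap ℂ[X] (RatFunc ℂ) P, algebraMap ℂ[X] (RatFunc ℂ) Q} : Set (RatFunc ℂ)) =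
        IntermediateField.adjoin ℂ ({algebraMap ℂ[X] (RatFunc ℂ) W} : Set (RatFunc ℂ)) ∧
      ∃ Pt Qt : ℂ[X], P = Pt.comp W ∧ Q = Qt.comp W ∧
        ¬ ∃ A B V : ℂ[X], 2 ≤ V.natDegree ∧ Pt = A.comp V ∧ Qt = B.comp V := by
  obtain ⟨W, hW, hEW, hcomp⟩ := adjoin_pair_eq_adjoin_polynomial_general P Q hP
  have hW_ne : W.natDegree ≠ 1 := adjoin_algebraMap_eq_top_iff.not.1 (hEW ▸ h)
  exact ⟨W, by omega, hEW, hcomp⟩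
end
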